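/- Let $(X_t)_{t\in\mathbb{Z}}$ be a Markov chain with transition matrix $P$ that is irreducible, aperiodic, and positive recurrent on a countable state space $S$. Then $(X_t)_{t\in\mathbb{Z}}$ is stationary if and only if for some (equivalently, every) state $x\in S$, the set $\{t\in\mathbb{Z} : X_t = x\}$ is almost surely unbounded above and below. -/

import Mathlib

open MeasureTheory ProbabilityTheory ENNReal
open scoped Classical

/-- `n`-step transition probabilities of a transition matrix. -/
noncomputable def matpow {S : Type*} (p : S → S → ℝ≥0∞) : ℕ → S → S → ℝ≥0∞
  | 0, x, y => if x = y then 1 else 0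
  | n+1, x, y => ∑' z, matpow p n x z * p z y

/-- Irreducibility of a transition matrix. -/
def Irreducible' {S : Type*} (p : S → S → ℝ≥0∞) : Prop := ∀ x y, ∃ n, 0 < matpow p n x y

/-- Aperiodicity: for each state, the gcd of the set of return times is 1. -/
def Aperiodic' {S : Type*} (p : S → S → ℝ≥0∞) : Prop :=
  ∀ x, ∀ d : ℕ, (∀ n : ℕ, 0 < n → 0 < matpow p n x x → d ∣ n) → d = 1

/-- First return probability: `fret p x n y` is the probability that a chain
with matrix `p` started at `y` first hits `x` at time `n ≥ 1`. -/
noncomputable def fret {S : Type*} (p : S → S → ℝ≥0∞) (x : S) : ℕ → S → ℝ≥0∞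
  | 0, _ => 0
  | n+1, y => ∑' z, p y z * (if z = x then (if n = 0 then 1 else 0) else fret p x n z)

/-- A state is positive recurrent for `p`: return is a.s. and has finite mean. -/
def PosRecMatrix {S : Type*} (p : S → S → ℝ≥0∞) (x : S) : Prop :=
  (∑' n : ℕ, fret p x n x) = 1 ∧ (∑' n : ℕ, (n : ℝ≥0∞) * fret p x n x) < ⊤

/-!
Stationarity to bi-recurrence: the event of no visit to `x` up to time `n` decreases in `n` and, by
stationarity, has constant probability. Hence, up to a null set, it is the same event for all `n`:
a past event at time `0` which excludes every future visit to `x`. By the Markov property and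
irreducibility it is null.

Conversely, suppose that `x` is visited at arbitrarily negative times. Decomposing according to the
last visit to `x` shows that `u t = ℙ(X_t = x)` solves the renewal equation
`u (t + 1) = ∑ₖ f k * u (t - k)` on all of `ℤ`, where `f k` is the probability that the first return
to `x` takes `k + 1` steps. By the Choquet-Deny theorem a bounded solution has every
possible return time as a period, so aperiodicity makes it constant. The same decomposition then
makes all one-dimensional marginals independent of time, and the Markov property
propagates this to the law of the whole process.
-/

section ChoquetDeny

variable {ι G : Type*} [AddCommGroup G] {f : ι → ℝ} {s : ι → G} {u : G → ℝ}

/-- A function on `G` is harmonic for the random walk that steps by `-s i` with weight `f i`; this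
is the convolution equation `u = μ * u` of Choquet and Deny for the discrete measure
`μ = ∑ f i δ_(s i)`. The weights are not required to sum to `1`. -/
def ConvHarmonic (f : ι → ℝ) (s : ι → G) (u : G → ℝ) : Prop :=
  ∀ t, HasSum (fun i => f i * u (t - s i)) (u t)

namespace ConvHarmonic

lemma neg (hu : ConvHarmonic f s u) : ConvHarmonic f s (fun t => -u t) := fun t => by
  simpa only [mul_neg] using (hu t).neg

lemma sub_translate (hu : ConvHarmonic f s u) (a : G) :
    ConvHarmonic f s (fun t => u t - u (t - a)) := fun t => by
  simpa only [mul_sub, sub_right_comm t a] using (hu t).sub (hu (t - a))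

lemma pow_mul_sub_le (hu : ConvHarmonic f s u) (hf : ∀ i, 0 ≤ f i) (hfs : Summable f)
    (hf1 : ∑' i, f i ≤ 1) {M : ℝ} (hM : 0 ≤ M) (huM : ∀ t, u t ≤ M) (i : ι) (n : ℕ) (t : G) :
    f i ^ n * (M - u (t - n • s i)) ≤ M - u t := by
  have one_step (t : G) : f i * (M - u (t - s i)) ≤ M - u t := by
    have hsum : HasSum (fun j => f j * (M - u (t - s j))) ((∑' j, f j) * M - u t) := by
      simpa only [mul_sub] using (hfs.hasSum.mul_right M).sub (hu t)
    calc f i * (M - u (t - s i))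
        ≤ (∑' j, f j) * M - u t :=
          le_hasSum hsum i fun j _ => mul_nonneg (hf j) (sub_nonneg.2 (huM _))
      _ ≤ M - u t := sub_le_sub_right (mul_le_of_le_one_left hM hf1) _
  induction n with
  | zero => simp
  | succ n ih =>
    calc f i ^ (n + 1) * (M - u (t - (n + 1) • s i))
        = f i ^ n * (f i * (M - u (t - n • s i - s i))) := by
          rw [pow_succ, mul_assoc, succ_nsmul, sub_sub]
      _ ≤ f i ^ n * (M - u (t - n • s i)) :=
          mul_le_mul_of_nonneg_left (one_step _) (pow_nonneg (hf i) n)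
      _ ≤ M - u t := ih

/- If the increment `w t = u t - u (t - s i)` had a positive supremum `M`, it would exceed `M / 2`
along an arbitrarily long progression of difference `s i`, and summing the increments along it would
contradict the boundedness of `u`. -/
lemma le_translate (hu : ConvHarmonic f s u) (hf : ∀ i, 0 ≤ f i) (hfs : Summable f)
    (hf1 : ∑' i, f i ≤ 1) {C : ℝ} (huC : ∀ t, |u t| ≤ C) {i : ι} (hi : 0 < f i) (t : G) :
    u t ≤ u (t - s i) := by
  set w : G → ℝ := fun t => u t - u (t - s i)
  have hwC (t : G) : w t ≤ 2 * C := by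
    linarith [abs_le.1 (huC t), abs_le.1 (huC (t - s i))]
  have hbdd : BddAbove (Set.range w) := ⟨2 * C, Set.forall_mem_range.2 hwC⟩
  by_contra! hlt
  set M := ⨆ t, w t
  have hM : 0 < M := (sub_pos.2 hlt).trans_le (le_ciSup hbdd t)
  have hfi : f i ≤ 1 := (hfs.le_tsum i fun j _ => hf j).trans hf1
  obtain ⟨n, hn⟩ := exists_nat_gt (2 * C / (M / 2))
  obtain ⟨t₀, ht₀⟩ : ∃ t₀, M - M / 2 * f i ^ n < w t₀ :=
    exists_lt_of_lt_ciSup (sub_lt_self M (by positivity))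
  have large_increment : ∀ j ∈ Finset.range n, M / 2 ≤ w (t₀ - j • s i) := fun j hj => by
    have hdecay : f i ^ j * (M - w (t₀ - j • s i)) ≤ f i ^ j * (M / 2) :=
      calc f i ^ j * (M - w (t₀ - j • s i))
          ≤ M - w t₀ :=
            (hu.sub_translate (s i)).pow_mul_sub_le hf hfs hf1 hM.le (le_ciSup hbdd) i j t₀
        _ ≤ f i ^ n * (M / 2) := by linarith
        _ ≤ f i ^ j * (M / 2) := mul_le_mul_of_nonneg_right
            (pow_le_pow_of_le_one hi.le hfi (Finset.mem_range.1 hj).le) (by positivity)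
    linarith [le_of_mul_le_mul_left hdecay (pow_pos hi j)]
  have : n * (M / 2) ≤ 2 * C :=
    calc n * (M / 2) = ∑ _j ∈ Finset.range n, M / 2 := by simp
      _ ≤ ∑ j ∈ Finset.range n, w (t₀ - j • s i) := Finset.sum_le_sum large_increment
      _ = u t₀ - u (t₀ - n • s i) := by
          simpa only [w, succ_nsmul, sub_sub, zero_smul, sub_zero] using
            Finset.sum_range_sub' (fun j => u (t₀ - j • s i)) n
      _ ≤ 2 * C := by linarith [abs_le.1 (huC t₀), abs_le.1 (huC (t₀ - n • s i))]
  exact this.not_gt ((div_lt_iff₀ (half_pos hM)).1 hn)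

theorem periodic (hu : ConvHarmonic f s u) (hf : ∀ i, 0 ≤ f i) (hfs : Summable f)
    (hf1 : ∑' i, f i ≤ 1) {C : ℝ} (huC : ∀ t, |u t| ≤ C) {i : ι} (hi : 0 < f i) :
    Function.Periodic u (s i) := fun t => by
  have hle := hu.le_translate hf hfs hf1 huC hi (t + s i)
  have hge := hu.neg.le_translate hf hfs hf1 (by simpa only [abs_neg] using huC) hi (t + s i)
  rw [add_sub_cancel_right] at hle hge
  exact hle.antisymm (neg_le_neg_iff.1 hge)

end ConvHarmonic

theorem periodic_of_eq_tsum_mul_translate {f : ι → ℝ≥0∞} {s : ι → G} {u : G → ℝ≥0∞}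
    (hf : ∑' i, f i ≤ 1) {C : ℝ≥0∞} (hC : C ≠ ⊤) (huC : ∀ t, u t ≤ C)
    (hu : ∀ t, u t = ∑' i, f i * u (t - s i)) {i : ι} (hi : f i ≠ 0) :
    Function.Periodic u (s i) := by
  have hf_top : ∑' i, f i ≠ ⊤ := ne_top_of_le_ne_top one_ne_top hf
  have hu_top (t : G) : u t ≠ ⊤ := ne_top_of_le_ne_top hC (huC t)
  have hharm : ConvHarmonic (fun i => (f i).toReal) s (fun t => (u t).toReal) := fun t => by
    have htop : ∑' i, f i * u (t - s i) ≠ ⊤ := hu t ▸ hu_top t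
    have := (ENNReal.summable_toReal htop).hasSum
    rwa [← ENNReal.tsum_toReal_eq fun i => ENNReal.ne_top_of_tsum_ne_top htop i, ← hu t,
      funext fun i => ENNReal.toReal_mul] at this
  have hf_real : ∑' i, (f i).toReal ≤ 1 := by
    rw [← ENNReal.tsum_toReal_eq (ENNReal.ne_top_of_tsum_ne_top hf_top)]
    exact ENNReal.toReal_mono one_ne_top hf
  have hu_real (t : G) : |(u t).toReal| ≤ C.toReal := by
    simpa only [ENNReal.abs_toReal] using ENNReal.toReal_mono hC (huC t)
  have hper := hharm.periodic (fun _ => toReal_nonneg) (ENNReal.summable_toReal hf_top) hf_real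
    hu_real (ENNReal.toReal_pos hi (ENNReal.ne_top_of_tsum_ne_top hf_top i))
  exact fun t => (ENNReal.toReal_eq_toReal_iff' (hu_top _) (hu_top _)).1 (hper t)

end ChoquetDeny

/-- The subgroup of periods of a function on an additive group. -/
def periodSubgroup {G α : Type*} [AddGroup G] (u : G → α) : AddSubgroup G where
  carrier := {c | Function.Periodic u c}
  zero_mem' t := by rw [add_zero]
  add_mem' hc hd := hc.add_period hd
  neg_mem' hc := hc.neg

section Taboo

variable {S : Type*} (p : S → S → ℝ≥0∞) (x : S)

/-- Taboo probabilities: `tabooProb p x n y` is the probability that a chain started at `x` is at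
`y` at time `n` without having returned to `x` at any of the times `1, …, n`. -/
noncomputable def tabooProb : ℕ → S → ℝ≥0∞
  | 0, y => if x = y then 1 else 0
  | n + 1, y => if y = x then 0 else ∑' z, tabooProb n z * p z y

/-- The probability that the first return to `x` of a chain started at `x` is at time `n + 1`. -/
noncomputable def firstReturnProb (n : ℕ) : ℝ≥0∞ :=
  ∑' z, tabooProb p x n z * p z x

variable {p}

lemma tsum_tabooProb_succ_add_firstReturnProb (hrow : ∀ x, ∑' y, p x y = 1) (n : ℕ) :
    ∑' y, tabooProb p x (n + 1) y + firstReturnProb p x n = ∑' y, tabooProb p x n y := by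
  have hreturn : firstReturnProb p x n
      = ∑' y, if y = x then ∑' z, tabooProb p x n z * p z y else 0 := by
    rw [tsum_ite_eq]
    rfl
  have hsplit (y : S) : tabooProb p x (n + 1) y
      + (if y = x then ∑' z, tabooProb p x n z * p z y else 0)
      = ∑' z, tabooProb p x n z * p z y := by
    rw [tabooProb]
    split_ifs <;> simp
  rw [hreturn, ← ENNReal.tsum_add]
  simp_rw [hsplit]
  rw [ENNReal.tsum_comm]
  simp_rw [ENNReal.tsum_mul_left, hrow, mul_one]

lemma tsum_firstReturnProb_le_one (hrow : ∀ x, ∑' y, p x y = 1) :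
    ∑' n, firstReturnProb p x n ≤ 1 := by
  have mass (n : ℕ) :
      ∑' y, tabooProb p x n y + ∑ m ∈ Finset.range n, firstReturnProb p x m = 1 := by
    induction n with
    | zero => simp [tabooProb]
    | succ n ih =>
      rw [Finset.sum_range_succ_comm, ← add_assoc,
        tsum_tabooProb_succ_add_firstReturnProb x hrow, ih]
  rw [ENNReal.tsum_eq_iSup_nat]
  exact iSup_le fun n => le_add_self.trans (mass n).le

variable {x}

/- The step from `n` to `n + 1` either prolongs the current excursion from `x`, of age `k`, or
completes it. -/
lemma exists_tabooProb_ne_zero_of_matpow_ne_zero {H : AddSubmonoid ℕ}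
    (hH : ∀ k, firstReturnProb p x k ≠ 0 → k + 1 ∈ H) {n : ℕ} {y : S} (hn : matpow p n x y ≠ 0) :
    ∃ m ∈ H, ∃ k, tabooProb p x k y ≠ 0 ∧ m + k = n := by
  induction n generalizing y with
  | zero => exact ⟨0, H.zero_mem, 0, hn, rfl⟩
  | succ n ih =>
    obtain ⟨z, hz⟩ : ∃ z, matpow p n x z * p z y ≠ 0 := by
      simpa only [matpow, ne_eq, ENNReal.tsum_eq_zero, not_forall] using hn
    obtain ⟨m, hm, k, hk, rfl⟩ := ih (left_ne_zero_of_mul hz)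
    have hstep : ∑' w, tabooProb p x k w * p w y ≠ 0 := fun h =>
      mul_ne_zero hk (right_ne_zero_of_mul hz) (ENNReal.tsum_eq_zero.1 h z)
    by_cases hy : y = x
    · subst hy
      exact ⟨m + (k + 1), H.add_mem hm (hH k hstep), 0, by simp [tabooProb], by ring⟩
    · exact ⟨m, hm, k + 1, by simpa only [tabooProb, if_neg hy] using hstep, by ring⟩

lemma mem_of_matpow_self_ne_zero {H : AddSubmonoid ℕ}
    (hH : ∀ k, firstReturnProb p x k ≠ 0 → k + 1 ∈ H) {n : ℕ} (hn : matpow p n x x ≠ 0) :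
    n ∈ H := by
  obtain ⟨m, hm, k, hk, rfl⟩ := exists_tabooProb_ne_zero_of_matpow_ne_zero hH hn
  cases k with
  | zero => exact hm
  | succ k => simp [tabooProb] at hk

lemma eq_top_of_firstReturnProb_ne_zero_mem (haper : Aperiodic' p) (H : AddSubgroup ℤ)
    (hH : ∀ k : ℕ, firstReturnProb p x k ≠ 0 → ((k + 1 : ℕ) : ℤ) ∈ H) : H = ⊤ := by
  obtain ⟨a, rfl⟩ : ∃ a, H = AddSubgroup.zmultiples a := by
    simpa only [AddSubgroup.zmultiples_eq_closure] using Int.subgroup_cyclic H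
  have hunit : a.natAbs = 1 := haper x _ fun n _ hn => by
    have : (n : ℤ) ∈ AddSubgroup.zmultiples a := mem_of_matpow_self_ne_zero
      (H := (AddSubgroup.zmultiples a).toAddSubmonoid.comap (Nat.castAddMonoidHom ℤ)) hH hn.ne'
    rwa [Int.mem_zmultiples_iff, ← Int.natAbs_dvd_natAbs] at this
  rw [AddSubgroup.eq_top_iff']
  exact fun b => Int.mem_zmultiples_iff.2 ((Int.isUnit_iff_natAbs_eq.2 hunit).dvd)

end Taboo

section Measure

variable {Ω S ι : Type*} [MeasurableSpace Ω] [MeasurableSpace S] [MeasurableSingletonClass S]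

lemma measurableSet_setOf_forall_mem_eq (J : Finset ι) (v : ι → S) :
    MeasurableSet {w : ι → S | ∀ i ∈ J, w i = v i} := by
  have : {w : ι → S | ∀ i ∈ J, w i = v i} = ⋂ i ∈ J, (fun w => w i) ⁻¹' {v i} := by
    ext w
    simp
  rw [this]
  exact J.measurableSet_biInter fun i _ => measurable_pi_apply i (measurableSet_singleton (v i))

variable [Countable S]

lemma ext_of_cofinal_cylinders {μ ν : Measure (ι → S)} [IsFiniteMeasure μ]
    (h : ∀ I : Finset ι, ∃ J, I ⊆ J ∧ ∀ v : ι → S,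
      μ {w | ∀ i ∈ J, w i = v i} = ν {w | ∀ i ∈ J, w i = v i}) : μ = ν := by
  refine IsProjectiveLimit.unique (P := fun I => μ.map I.restrict) (fun _ => rfl) fun I => ?_
  obtain ⟨J, hIJ, hJ⟩ := h I
  have hmap : ν.map J.restrict = μ.map J.restrict := Measure.ext_of_singleton fun x => by
    rw [Measure.map_apply (Finset.measurable_restrict J) (measurableSet_singleton x),
      Measure.map_apply (Finset.measurable_restrict J) (measurableSet_singleton x)]
    by_cases hx : ∃ v : ι → S, J.restrict v = x
    · obtain ⟨v, rfl⟩ := hx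
      have hcyl : J.restrict (π := fun _ => S) ⁻¹' {J.restrict v} = {w | ∀ i ∈ J, w i = v i} := by
        ext w
        simp [funext_iff]
      rw [hcyl, hJ]
    · have hempty : J.restrict (π := fun _ => S) ⁻¹' {x} = ∅ :=
        Set.eq_empty_of_forall_notMem fun w hw => hx ⟨w, hw⟩
      rw [hempty, measure_empty, measure_empty]
  beta_reduce
  rw [← Finset.restrict₂_comp_restrict (π := fun _ => S) hIJ,
    ← Measure.map_map (Finset.measurable_restrict₂ hIJ) (Finset.measurable_restrict J), hmap,
    Measure.map_map (Finset.measurable_restrict₂ hIJ) (Finset.measurable_restrict J)]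

lemma measure_eq_tsum_inter_fiber (P : Measure Ω) {Y : Ω → S} (hY : Measurable Y) (E : Set Ω) :
    P E = ∑' z, P (E ∩ {ω | Y ω = z}) := by
  have hfiber (z : S) : P (E ∩ {ω | Y ω = z}) = P.restrict E (Y ⁻¹' {z}) := by
    rw [Measure.restrict_apply (hY (measurableSet_singleton z)), Set.inter_comm]
    rfl
  simp_rw [hfiber]
  rw [← measure_iUnion (fun _ _ hne => Disjoint.preimage _ (Set.disjoint_singleton.2 hne))
      fun z => hY (measurableSet_singleton z), ← Set.preimage_iUnion, Set.iUnion_of_singleton,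
    Set.preimage_univ, Measure.restrict_apply_univ]

lemma ae_mem_iff_mem_of_ae_eq_succ {P : Measure Ω} {E : ℤ → Set Ω}
    (hE : ∀ n, E n =ᵐ[P] E (n + 1)) : ∀ᵐ ω ∂P, ∀ m n, ω ∈ E m ↔ ω ∈ E n := by
  filter_upwards [ae_all_iff.2 fun n => (hE n).mem_iff] with ω hω
  have eq_zero (n : ℤ) : ω ∈ E n ↔ ω ∈ E 0 := by
    induction n with
    | zero => rfl
    | succ n ih => rw [← hω n, ih]
    | pred n ih => rw [hω (-n - 1), sub_add_cancel, ih]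
  exact fun m n => (eq_zero m).trans (eq_zero n).symm

end Measure

/-- The trajectory up to time `t`, read backwards: the coordinate of index `i` is `X (t - i)`. -/
def past {Ω S : Type*} (X : ℤ → Ω → S) (t : ℤ) (ω : Ω) : ℕ → S := fun i => X (t - i) ω

/-- The σ-algebra of events depending only on the process up to time `t`. -/
abbrev pastSigma {Ω S : Type*} [MeasurableSpace S] (X : ℤ → Ω → S) (t : ℤ) : MeasurableSpace Ω :=
  MeasurableSpace.comap (past X t) MeasurableSpace.pi

/-- The event that the process does not visit the state `x` at any time in `T`. -/
def noVisit {Ω S : Type*} (X : ℤ → Ω → S) (x : S) (T : Set ℤ) : Set Ω :=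
  {ω | ∀ t ∈ T, X t ω ≠ x}

/-- The event that `s` is the last time up to `t` at which the process visits the state `x`. -/
def lastVisitAt {Ω S : Type*} (X : ℤ → Ω → S) (x : S) (s t : ℤ) : Set Ω :=
  {ω | X s ω = x} ∩ noVisit X x (Set.Ioc s t)

/-- `X` is a Markov chain over `ℤ` with transition matrix `p`. Conditioning on the past is
expressed on the cylinder events `X t = xs 0, …, X (t - k) = xs k`, without dividing by their
probabilities. -/
def IsMarkovChain {Ω S : Type*} [MeasurableSpace Ω] (P : Measure Ω) (p : S → S → ℝ≥0∞)
    (X : ℤ → Ω → S) : Prop :=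
  ∀ (t : ℤ) (k : ℕ) (x : S) (xs : ℕ → S),
    P ({ω | X (t + 1) ω = x} ∩ {ω | ∀ i : ℕ, i ≤ k → X (t - i) ω = xs i})
      = p (xs 0) x * P {ω | ∀ i : ℕ, i ≤ k → X (t - i) ω = xs i}

/-- The law of the process is invariant under the unit time shift, hence under all time shifts. -/
def IsStationaryProcess {Ω S : Type*} [MeasurableSpace Ω] [MeasurableSpace S] (P : Measure Ω)
    (X : ℤ → Ω → S) : Prop :=
  P.map (fun ω (t : ℤ) => X (t + 1) ω) = P.map (fun ω (t : ℤ) => X t ω)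

/-- The state `x` is almost surely visited at arbitrarily negative times. -/
def IsBackwardRecurrent {Ω S : Type*} [MeasurableSpace Ω] (P : Measure Ω) (X : ℤ → Ω → S)
    (x : S) : Prop :=
  ∀ᵐ ω ∂P, ∀ n : ℤ, ∃ t, t ≤ n ∧ X t ω = x

/-- The set of visit times to `x` is almost surely unbounded above and below. -/
def IsBirecurrent {Ω S : Type*} [MeasurableSpace Ω] (P : Measure Ω) (X : ℤ → Ω → S)
    (x : S) : Prop :=
  ∀ᵐ ω ∂P, (∀ n : ℤ, ∃ t, n ≤ t ∧ X t ω = x) ∧ (∀ n : ℤ, ∃ t, t ≤ n ∧ X t ω = x)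

section PastEvents

variable {Ω S : Type*} [MeasurableSpace S] {X : ℤ → Ω → S}

lemma measurable_of_le_pastSigma {s t : ℤ} (hst : s ≤ t) : Measurable[pastSigma X t] (X s) := by
  have heval : X s = (fun v : ℕ → S => v (t - s).toNat) ∘ past X t := by
    funext ω
    simp [past, Int.toNat_of_nonneg (sub_nonneg.2 hst)]
  rw [heval]
  exact (measurable_pi_apply _).comp (comap_measurable _)

lemma pastSigma_mono {s t : ℤ} (hst : s ≤ t) : pastSigma X s ≤ pastSigma X t :=
  Measurable.comap_le <| @measurable_pi_lambda _ _ _ (pastSigma X t) _ _ fun i =>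
    measurable_of_le_pastSigma (by omega)

variable [MeasurableSingletonClass S] {m : MeasurableSpace Ω} {x : S}

lemma measurableSet_noVisit {T : Set ℤ} (hX : ∀ t ∈ T, Measurable (X t)) :
    MeasurableSet (noVisit X x T) := by
  have : noVisit X x T = ⋂ t ∈ T, X t ⁻¹' {x}ᶜ := by
    ext ω
    simp [noVisit]
  rw [this]
  exact MeasurableSet.biInter T.to_countable fun t ht =>
    hX t ht (measurableSet_singleton x).compl

lemma measurableSet_lastVisitAt {s t : ℤ} (hst : s ≤ t) (hX : ∀ r ≤ t, Measurable (X r)) :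
    MeasurableSet (lastVisitAt X x s t) :=
  (hX s hst (measurableSet_singleton x)).inter (measurableSet_noVisit fun r hr => hX r hr.2)

end PastEvents

lemma noVisit_anti {Ω S : Type*} {X : ℤ → Ω → S} {x : S} {T T' : Set ℤ} (h : T ⊆ T') :
    noVisit X x T' ⊆ noVisit X x T :=
  fun _ hω t ht => hω t (h ht)

section LastVisit

variable {Ω S : Type*} {X : ℤ → Ω → S} {x : S}

lemma disjoint_lastVisitAt {r s t : ℤ} (hrs : r < s) (hst : s ≤ t) :
    Disjoint (lastVisitAt X x r t) (lastVisitAt X x s t) :=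
  Set.disjoint_left.2 fun _ hr hs => hr.2 s ⟨hrs, hst⟩ hs.1

lemma exists_mem_lastVisitAt {ω : Ω} {t : ℤ} (h : ∃ s, s ≤ t ∧ X s ω = x) :
    ∃ k : ℕ, ω ∈ lastVisitAt X x (t - k) t := by
  obtain ⟨s, ⟨hst, hs⟩, hmax⟩ := Int.exists_greatest_of_bdd ⟨t, fun r hr => hr.1⟩ h
  refine ⟨(t - s).toNat, ?_⟩
  rw [Int.toNat_of_nonneg (sub_nonneg.2 hst), Int.sub_sub_self]
  exact ⟨hs, fun r hr hx => (hmax r ⟨hr.2, hx⟩).not_gt hr.1⟩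

variable [MeasurableSpace Ω] [MeasurableSpace S] [MeasurableSingletonClass S] {P : Measure Ω}

lemma IsBackwardRecurrent.measure_eq_tsum_lastVisitAt (hb : IsBackwardRecurrent P X x)
    (hX : ∀ t, Measurable (X t)) (t : ℤ) {E : Set Ω} (hE : MeasurableSet E) :
    P E = ∑' k : ℕ, P (lastVisitAt X x (t - k) t ∩ E) := by
  have hcover : E =ᵐ[P] ⋃ k : ℕ, lastVisitAt X x (t - k) t ∩ E := by
    filter_upwards [hb] with ω hω
    obtain ⟨k, hk⟩ := exists_mem_lastVisitAt (hω t)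
    refine propext ⟨fun h => Set.mem_iUnion.2 ⟨k, hk, h⟩, fun h => ?_⟩
    exact (Set.mem_iUnion.1 h).choose_spec.2
  have hdisj : Pairwise (Function.onFun Disjoint fun k : ℕ => lastVisitAt X x (t - k) t ∩ E) := by
    refine (pairwise_disjoint_on _).2 fun j k hjk => ?_
    exact ((disjoint_lastVisitAt (by omega) (by omega)).symm.mono Set.inter_subset_left
      Set.inter_subset_left)
  rw [measure_congr hcover, measure_iUnion hdisj fun k =>
    (measurableSet_lastVisitAt (by omega) fun r _ => hX r).inter hE]

end LastVisit

lemma forall_mem_Icc_sub_natCast_iff {q : ℤ → Prop} {b : ℤ} {k : ℕ} :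
    (∀ j ∈ Finset.Icc (b - k) b, q j) ↔ ∀ i : ℕ, i ≤ k → q (b - i) := by
  refine ⟨fun h i hi => h _ (Finset.mem_Icc.2 (by omega)), fun h j hj => ?_⟩
  rw [Finset.mem_Icc] at hj
  have := h (b - j).toNat (by omega)
  rwa [Int.toNat_of_nonneg (sub_nonneg.2 hj.2), Int.sub_sub_self] at this

section MarkovChain

variable {Ω S : Type*} [MeasurableSpace Ω] {P : Measure Ω} {p : S → S → ℝ≥0∞} {X : ℤ → Ω → S}

namespace IsMarkovChain

lemma measure_cylinder_inter_succ (hm : IsMarkovChain P p X) (t : ℤ) (k : ℕ) (xs : ℕ → S)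
    (y : S) :
    P ({ω | ∀ i : ℕ, i ≤ k → X (t - i) ω = xs i} ∩ {ω | X (t + 1) ω = y})
      = ∑' z, P ({ω | ∀ i : ℕ, i ≤ k → X (t - i) ω = xs i} ∩ {ω | X t ω = z}) * p z y := by
  set C := {ω | ∀ i : ℕ, i ≤ k → X (t - i) ω = xs i} with hC
  have hC_now : C ⊆ {ω | X t ω = xs 0} := fun ω hω => by simpa using hω 0 k.zero_le
  rw [tsum_eq_single (xs 0)]
  · rw [Set.inter_eq_left.2 hC_now, Set.inter_comm, hC, hm, mul_comm]
  · intro z hz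
    have hempty : C ∩ {ω | X t ω = z} = ∅ :=
      Set.eq_empty_of_forall_notMem fun ω hω => hz (hω.2.symm.trans (hC_now hω.1))
    rw [hempty, measure_empty, zero_mul]

lemma measure_cylinder_succ (hm : IsMarkovChain P p X)
    (hconst : ∀ t y, P {ω | X (t + 1) ω = y} = P {ω | X t ω = y}) (t : ℤ) (k : ℕ) (xs : ℕ → S) :
    P {ω | ∀ i : ℕ, i ≤ k → X (t + 1 - i) ω = xs i}
      = P {ω | ∀ i : ℕ, i ≤ k → X (t - i) ω = xs i} := by
  induction k generalizing t xs with
  | zero => simpa using hconst t (xs 0)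
  | succ k ih =>
    have hsplit (r : ℤ) : {ω | ∀ i : ℕ, i ≤ k + 1 → X (r + 1 - i) ω = xs i}
        = {ω | X (r + 1) ω = xs 0} ∩ {ω | ∀ i : ℕ, i ≤ k → X (r - i) ω = xs (i + 1)} := by
      ext ω
      have hshift (i : ℕ) : r + 1 - ((i + 1 : ℕ) : ℤ) = r - i := by push_cast; ring
      refine ⟨fun h => ⟨by simpa using h 0 (Nat.zero_le _), fun i hi => ?_⟩, fun h i hi => ?_⟩
      · simpa only [hshift] using h (i + 1) (Nat.succ_le_succ hi)
      · cases i with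
        | zero => simpa using h.1
        | succ i => simpa only [hshift] using h.2 i (Nat.le_of_succ_le_succ hi)
    obtain ⟨r, rfl⟩ : ∃ r, t = r + 1 := ⟨t - 1, by ring⟩
    rw [hsplit, hsplit, hm _ _ _ fun i => xs (i + 1), hm _ _ _ fun i => xs (i + 1), ih]

variable [MeasurableSpace S] [MeasurableSingletonClass S] [Countable S] [IsFiniteMeasure P]

lemma measure_inter_succ (hm : IsMarkovChain P p X) (hX : ∀ t, Measurable (X t)) {t : ℤ}
    {A : Set Ω} (hA : MeasurableSet[pastSigma X t] A) (y : S) :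
    P (A ∩ {ω | X (t + 1) ω = y}) = ∑' z, P (A ∩ {ω | X t ω = z}) * p z y := by
  have hpast : Measurable (past X t) := measurable_pi_lambda _ fun _ => hX _
  set μ := (P.restrict {ω | X (t + 1) ω = y}).map (past X t) with hμ
  set ν := Measure.sum fun z => p z y • (P.restrict {ω | X t ω = z}).map (past X t) with hν
  have μ_apply {B : Set (ℕ → S)} (hB : MeasurableSet B) :
      μ B = P (past X t ⁻¹' B ∩ {ω | X (t + 1) ω = y}) := by
    rw [hμ, Measure.map_apply hpast hB, Measure.restrict_apply (hpast hB)]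
  have ν_apply {B : Set (ℕ → S)} (hB : MeasurableSet B) :
      ν B = ∑' z, P (past X t ⁻¹' B ∩ {ω | X t ω = z}) * p z y := by
    rw [hν, Measure.sum_apply _ hB]
    refine tsum_congr fun z => ?_
    rw [Measure.smul_apply, Measure.map_apply hpast hB, Measure.restrict_apply (hpast hB),
      smul_eq_mul, mul_comm]
  have hμν : μ = ν := ext_of_cofinal_cylinders fun I => by
    refine ⟨Finset.Iic (I.sup id), fun i hi => Finset.mem_Iic.2 (I.le_sup (f := id) hi),
      fun v => ?_⟩
    have hcyl := measurableSet_setOf_forall_mem_eq (Finset.Iic (I.sup id)) v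
    rw [μ_apply hcyl, ν_apply hcyl]
    simpa only [Finset.mem_Iic, Set.preimage_ofPred_eq, past]
      using hm.measure_cylinder_inter_succ t (I.sup id) v y
  obtain ⟨B, hB, rfl⟩ := hA
  rw [← μ_apply hB, hμν, ν_apply hB]

lemma measure_inter_add (hm : IsMarkovChain P p X) (hX : ∀ t, Measurable (X t)) {t : ℤ}
    {A : Set Ω} (hA : MeasurableSet[pastSigma X t] A) (n : ℕ) (y : S) :
    P (A ∩ {ω | X (t + n) ω = y}) = ∑' z, P (A ∩ {ω | X t ω = z}) * matpow p n z y := by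
  induction n generalizing y with
  | zero => simp [matpow]
  | succ n ih =>
    rw [Nat.cast_succ, ← add_assoc, hm.measure_inter_succ hX (pastSigma_mono (by omega) A hA)]
    simp_rw [ih, matpow, ← ENNReal.tsum_mul_left, ← ENNReal.tsum_mul_right, mul_assoc]
    exact ENNReal.tsum_comm

lemma measure_lastVisitAt_inter (hm : IsMarkovChain P p X) (hX : ∀ t, Measurable (X t)) (x : S)
    (s : ℤ) (n : ℕ) (y : S) :
    P (lastVisitAt X x s (s + n) ∩ {ω | X (s + n) ω = y})
      = P {ω | X s ω = x} * tabooProb p x n y := by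
  induction n generalizing y with
  | zero =>
    by_cases hxy : x = y
    · subst hxy
      simp [lastVisitAt, noVisit, tabooProb]
    · have hempty : {ω | X s ω = x} ∩ {ω | X s ω = y} = ∅ :=
        Set.eq_empty_of_forall_notMem fun ω hω => hxy (hω.1.symm.trans hω.2)
      simp [lastVisitAt, noVisit, tabooProb, hxy, hempty]
  | succ n ih =>
    rw [Nat.cast_succ, ← add_assoc, tabooProb]
    split_ifs with hyx
    · have hempty : lastVisitAt X x s (s + n + 1) ∩ {ω | X (s + n + 1) ω = y} = ∅ :=
        Set.eq_empty_of_forall_notMem fun ω hω =>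
          hω.1.2 _ ⟨by omega, le_rfl⟩ (hω.2.trans hyx)
      rw [hempty, measure_empty, mul_zero]
    · have hextend : lastVisitAt X x s (s + n + 1) ∩ {ω | X (s + n + 1) ω = y}
          = lastVisitAt X x s (s + n) ∩ {ω | X (s + n + 1) ω = y} := by
        ext ω
        refine ⟨fun hω => ⟨⟨hω.1.1, fun r hr => hω.1.2 r ⟨hr.1, by have := hr.2; omega⟩⟩, hω.2⟩,
          fun hω => ⟨⟨hω.1.1, fun r hr => ?_⟩, hω.2⟩⟩
        rcases hr.2.eq_or_lt with rfl | hlt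
        · exact fun h => hyx (hω.2.symm.trans h)
        · exact hω.1.2 r ⟨hr.1, by omega⟩
      rw [hextend, hm.measure_inter_succ hX
        (measurableSet_lastVisitAt (by omega) fun r hr => measurable_of_le_pastSigma hr)]
      simp_rw [ih, mul_assoc, ENNReal.tsum_mul_left]

lemma measure_lastVisitAt_inter_return (hm : IsMarkovChain P p X) (hX : ∀ t, Measurable (X t))
    (x : S) (s : ℤ) (n : ℕ) :
    P (lastVisitAt X x s (s + n) ∩ {ω | X (s + n + 1) ω = x})
      = P {ω | X s ω = x} * firstReturnProb p x n := by
  rw [hm.measure_inter_succ hX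
    (measurableSet_lastVisitAt (by omega) fun r hr => measurable_of_le_pastSigma hr)]
  simp_rw [hm.measure_lastVisitAt_inter hX, mul_assoc, ENNReal.tsum_mul_left]
  rfl

lemma measure_eq_tsum_tabooProb (hm : IsMarkovChain P p X) (hX : ∀ t, Measurable (X t)) {x : S}
    (hb : IsBackwardRecurrent P X x) (t : ℤ) (y : S) :
    P {ω | X t ω = y} = ∑' k : ℕ, P {ω | X (t - k) ω = x} * tabooProb p x k y := by
  rw [hb.measure_eq_tsum_lastVisitAt hX t (E := {ω | X t ω = y}) (hX t (measurableSet_singleton y))]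
  refine tsum_congr fun k => ?_
  simpa only [sub_add_cancel] using hm.measure_lastVisitAt_inter hX x (t - k) k y

lemma renewal_equation (hm : IsMarkovChain P p X) (hX : ∀ t, Measurable (X t)) {x : S}
    (hb : IsBackwardRecurrent P X x) (t : ℤ) :
    P {ω | X (t + 1) ω = x} = ∑' k : ℕ, P {ω | X (t - k) ω = x} * firstReturnProb p x k := by
  rw [hb.measure_eq_tsum_lastVisitAt hX t (E := {ω | X (t + 1) ω = x})
    (hX (t + 1) (measurableSet_singleton x))]
  refine tsum_congr fun k => ?_
  simpa only [sub_add_cancel] using hm.measure_lastVisitAt_inter_return hX x (t - k) k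

lemma measure_recurrent_state_succ (hm : IsMarkovChain P p X) (hX : ∀ t, Measurable (X t))
    (hrow : ∀ x, ∑' y, p x y = 1) (haper : Aperiodic' p) {x : S}
    (hb : IsBackwardRecurrent P X x) (t : ℤ) :
    P {ω | X (t + 1) ω = x} = P {ω | X t ω = x} := by
  set u : ℤ → ℝ≥0∞ := fun t => P {ω | X t ω = x}
  have hu (t : ℤ) : u t = ∑' k : ℕ, firstReturnProb p x k * u (t - (k + 1 : ℕ)) := by
    have hrenewal := hm.renewal_equation hX hb (t - 1)
    rw [sub_add_cancel] at hrenewal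
    refine hrenewal.trans (tsum_congr fun k => ?_)
    rw [mul_comm, sub_sub, Nat.cast_succ, add_comm (1 : ℤ)]
  have htop : periodSubgroup u = ⊤ := eq_top_of_firstReturnProb_ne_zero_mem haper _ fun _ hk =>
    periodic_of_eq_tsum_mul_translate (tsum_firstReturnProb_le_one x hrow)
      (measure_ne_top P Set.univ) (fun _ => measure_mono (Set.subset_univ _)) hu hk
  have hone : (1 : ℤ) ∈ periodSubgroup u := htop ▸ AddSubgroup.mem_top (1 : ℤ)
  exact hone t

lemma measure_state_succ (hm : IsMarkovChain P p X) (hX : ∀ t, Measurable (X t))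
    (hrow : ∀ x, ∑' y, p x y = 1) (haper : Aperiodic' p) {x : S}
    (hb : IsBackwardRecurrent P X x) (t : ℤ) (y : S) :
    P {ω | X (t + 1) ω = y} = P {ω | X t ω = y} := by
  rw [hm.measure_eq_tsum_tabooProb hX hb, hm.measure_eq_tsum_tabooProb hX hb]
  refine tsum_congr fun k => ?_
  rw [add_sub_right_comm, hm.measure_recurrent_state_succ hX hrow haper hb]

lemma isStationaryProcess (hm : IsMarkovChain P p X) (hX : ∀ t, Measurable (X t))
    (hconst : ∀ t y, P {ω | X (t + 1) ω = y} = P {ω | X t ω = y}) : IsStationaryProcess P X := by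
  refine ext_of_cofinal_cylinders fun I => ?_
  obtain ⟨a, ha⟩ := I.bddBelow
  obtain ⟨b, hb⟩ := I.bddAbove
  set k := (b - a).toNat
  refine ⟨Finset.Icc (b - k) b, fun i hi => Finset.mem_Icc.2 ⟨?_, hb hi⟩, fun v => ?_⟩
  · have := ha hi
    have := hb hi
    omega
  have hcyl := measurableSet_setOf_forall_mem_eq (Finset.Icc (b - k) b) v
  rw [Measure.map_apply (measurable_pi_lambda _ fun t => hX (t + 1)) hcyl,
    Measure.map_apply (measurable_pi_lambda _ hX) hcyl]
  simpa only [Set.preimage_ofPred_eq, forall_mem_Icc_sub_natCast_iff, ← add_sub_right_comm]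
    using hm.measure_cylinder_succ hconst b k fun i => v (b - i)

end IsMarkovChain

end MarkovChain

section Stationary

variable {Ω S : Type*} [MeasurableSpace Ω] [MeasurableSpace S] [MeasurableSingletonClass S]
  {P : Measure Ω} {X : ℤ → Ω → S} {x : S}

namespace IsStationaryProcess

lemma measure_noVisit_translate (hst : IsStationaryProcess P X) (hX : ∀ t, Measurable (X t))
    (T : Set ℤ) : P (noVisit X x ((fun t => t - 1) ⁻¹' T)) = P (noVisit X x T) := by
  have hE : MeasurableSet {v : ℤ → S | ∀ t ∈ T, v t ≠ x} :=
    measurableSet_noVisit (X := fun t (v : ℤ → S) => v t) fun t _ => measurable_pi_apply t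
  have hlaw := congrArg (fun μ => μ {v : ℤ → S | ∀ t ∈ T, v t ≠ x}) hst
  beta_reduce at hlaw
  rw [Measure.map_apply (measurable_pi_lambda _ fun t => hX (t + 1)) hE,
    Measure.map_apply (measurable_pi_lambda _ hX) hE] at hlaw
  refine Eq.trans ?_ hlaw
  congr 1
  ext ω
  exact (Equiv.subRight (1 : ℤ)).forall_congr (by simp)

variable [IsFiniteMeasure P]

lemma ae_mem_noVisit_Iic_iff (hst : IsStationaryProcess P X) (hX : ∀ t, Measurable (X t)) :
    ∀ᵐ ω ∂P, ∀ m n, ω ∈ noVisit X x (Set.Iic m) ↔ ω ∈ noVisit X x (Set.Iic n) :=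
  ae_mem_iff_mem_of_ae_eq_succ fun n => by
    have heq := hst.measure_noVisit_translate (x := x) hX (Set.Iic n)
    rw [Set.preimage_sub_const_Iic] at heq
    exact (ae_eq_of_subset_of_measure_ge
      (noVisit_anti (Set.Iic_subset_Iic.2 (by omega))) heq.ge
      (measurableSet_noVisit fun t _ => hX t).nullMeasurableSet (measure_ne_top P _)).symm

lemma ae_mem_noVisit_Ici_iff (hst : IsStationaryProcess P X) (hX : ∀ t, Measurable (X t)) :
    ∀ᵐ ω ∂P, ∀ m n, ω ∈ noVisit X x (Set.Ici m) ↔ ω ∈ noVisit X x (Set.Ici n) :=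
  ae_mem_iff_mem_of_ae_eq_succ fun n => by
    have heq := hst.measure_noVisit_translate (x := x) hX (Set.Ici n)
    rw [Set.preimage_sub_const_Ici] at heq
    exact ae_eq_of_subset_of_measure_ge
      (noVisit_anti (Set.Ici_subset_Ici.2 (by omega))) heq.le
      (measurableSet_noVisit fun t _ => hX t).nullMeasurableSet (measure_ne_top P _)

variable [Countable S] {p : S → S → ℝ≥0∞}

lemma measure_noVisit_Iic_zero (hst : IsStationaryProcess P X) (hm : IsMarkovChain P p X)
    (hX : ∀ t, Measurable (X t)) (hirr : Irreducible' p) : P (noVisit X x (Set.Iic 0)) = 0 := by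
  have hpast : MeasurableSet[pastSigma X 0] (noVisit X x (Set.Iic 0)) :=
    measurableSet_noVisit fun _ ht => measurable_of_le_pastSigma ht
  have hfuture (n : ℕ) : P (noVisit X x (Set.Iic 0) ∩ {ω | X (0 + n) ω = x}) = 0 := by
    rw [← compl_mem_ae_iff]
    filter_upwards [hst.ae_mem_noVisit_Iic_iff (x := x) hX] with ω hω hmem
    exact (hω 0 (0 + n)).1 hmem.1 _ (Set.mem_Iic.2 le_rfl) hmem.2
  rw [measure_eq_tsum_inter_fiber P (hX 0), ENNReal.tsum_eq_zero]
  intro z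
  obtain ⟨n, hn⟩ := hirr z x
  have hterm := hfuture n
  rw [hm.measure_inter_add hX hpast, ENNReal.tsum_eq_zero] at hterm
  exact (mul_eq_zero.1 (hterm z)).resolve_right hn.ne'

theorem isBirecurrent (hst : IsStationaryProcess P X) (hm : IsMarkovChain P p X)
    (hX : ∀ t, Measurable (X t)) (hirr : Irreducible' p) (x : S) : IsBirecurrent P X x := by
  filter_upwards [hst.ae_mem_noVisit_Iic_iff (x := x) hX, hst.ae_mem_noVisit_Ici_iff (x := x) hX,
    measure_eq_zero_iff_ae_notMem.1 (hst.measure_noVisit_Iic_zero (x := x) hm hX hirr)]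
    with ω hIic hIci hvisit
  have hback (n : ℤ) : ∃ t, t ≤ n ∧ X t ω = x := by
    simpa [noVisit] using (hIic n 0).not.2 hvisit
  obtain ⟨s, -, hs⟩ := hback 0
  refine ⟨fun n => ?_, hback⟩
  have : ω ∉ noVisit X x (Set.Ici n) := (hIci n s).not.2 fun h => h s Set.self_mem_Ici hs
  simpa [noVisit] using this

end IsStationaryProcess

end Stationary

theorem stationary_iff_birecurrent_general {Ω S : Type*} [MeasurableSpace Ω] [MeasurableSpace S]
    [MeasurableSingletonClass S] [Countable S] (P : Measure Ω) [IsProbabilityMeasure P]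
    (p : S → S → ℝ≥0∞) (hrow : ∀ x, ∑' y, p x y = 1) (hirr : Irreducible' p)
    (haper : Aperiodic' p) (X : ℤ → Ω → S) (hX : ∀ t, Measurable (X t))
    (hm : IsMarkovChain P p X) :
    List.TFAE [IsStationaryProcess P X, ∃ x, IsBackwardRecurrent P X x, ∃ x, IsBirecurrent P X x,
      ∀ x, IsBirecurrent P X x] := by
  have : Nonempty S := (nonempty_of_isProbabilityMeasure P).map (X 0)
  tfae_have 1 → 4 := fun hst x => hst.isBirecurrent hm hX hirr x
  tfae_have 4 → 3 := fun h => ⟨Classical.arbitrary S, h _⟩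
  tfae_have 3 → 2 := fun ⟨x, hx⟩ => ⟨x, hx.mono fun _ h => h.2⟩
  tfae_have 2 → 1 := fun ⟨_, hb⟩ =>
    hm.isStationaryProcess hX (hm.measure_state_succ hX hrow haper hb)
  tfae_finish

/-- A Markov chain indexed by all of `ℤ` with an irreducible, aperiodic,
positive recurrent transition matrix is stationary if and only if it is
bi-recurrent for some (equivalently, every) state. -/
theorem stationary_iff_birecurrent
    {Ω S : Type*} [MeasurableSpace Ω] [MeasurableSpace S] [MeasurableSingletonClass S]
    [Countable S] (P : Measure Ω) [IsProbabilityMeasure P]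
    (p : S → S → ℝ≥0∞) (hrow : ∀ x, ∑' y, p x y = 1)
    (hirr : Irreducible' p) (haper : Aperiodic' p) (hposrec : ∀ x, PosRecMatrix p x)
    (X : ℤ → Ω → S) (hXmeas : ∀ t, Measurable (X t))
    (hmarkov : ∀ (t : ℤ) (k : ℕ) (x : S) (xs : ℕ → S),
      P ({ω | X (t + 1) ω = x} ∩ {ω | ∀ i : ℕ, i ≤ k → X (t - i) ω = xs i})
        = p (xs 0) x * P {ω | ∀ i : ℕ, i ≤ k → X (t - i) ω = xs i}) :
    ((Measure.map (fun ω (t : ℤ) => X (t + 1) ω) P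
        = Measure.map (fun ω (t : ℤ) => X t ω) P)
      ↔ ∃ x : S, ∀ᵐ ω ∂P,
          (∀ n : ℤ, ∃ t, n ≤ t ∧ X t ω = x) ∧ (∀ n : ℤ, ∃ t, t ≤ n ∧ X t ω = x))
    ∧ ((Measure.map (fun ω (t : ℤ) => X (t + 1) ω) P
        = Measure.map (fun ω (t : ℤ) => X t ω) P)
      ↔ ∀ x : S, ∀ᵐ ω ∂P,
          (∀ n : ℤ, ∃ t, n ≤ t ∧ X t ω = x) ∧ (∀ n : ℤ, ∃ t, t ≤ n ∧ X t ω = x)) := by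
  have h := stationary_iff_birecurrent_general P p hrow hirr haper X hXmeas hmarkov
  exact ⟨h.out 0 2, h.out 0 3⟩
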